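/- arXiv:2602.15471 — 4 statements merged into one kernel-verified Lean document; each statement's English description precedes it below -/
import Mathlib

section
/- Let 𝔥 > 1, set φ = 𝔥 + √(𝔥² − 1), and let a ∈ 𝔻 (identifying ℝ² with ℂ, with ā the complex conjugate of a). Then φ²|1 − āx|² − |x − a|² > 0 for every x in the closed unit disk, so the bubble u_a(x) = 2 log( 2φ(1−|a|²) / (φ²|1−āx|² − |x−a|²) ) is a smooth function on the closed disk, and u_a satisfies −Δu_a = −2e^{u_a} in 𝔻 and ∂_ν u_a + 2 = 2𝔥 e^{u_a/2} on ∂𝔻. -/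
open MeasureTheory Real Filter

noncomputable section

/-- The open unit disk in ℝ² ≅ ℂ. -/
def unitDisk : Set ℂ := Metric.ball 0 1

/-- The unit circle ∂𝔻. -/
def unitCircle : Set ℂ := Metric.sphere 0 1

/-- The closed unit disk. -/
def closedUnitDisk : Set ℂ := Metric.closedBall 0 1

/-- Directional derivative of `u` at `x` in direction `v`. -/
def pd (u : ℂ → ℝ) (v x : ℂ) : ℝ := fderiv ℝ u x v

/-- Laplacian of `u` at `x`. -/
def lap (u : ℂ → ℝ) (x : ℂ) : ℝ :=
  fderiv ℝ (fun y => pd u 1 y) x 1 + fderiv ℝ (fun y => pd u Complex.I y) x Complex.I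

/-- Squared norm of the gradient, |∇u|². -/
def gradSq (u : ℂ → ℝ) (x : ℂ) : ℝ := pd u 1 x ^ 2 + pd u Complex.I x ^ 2

/-- Outward normal derivative ∂_ν u(x) = ∇u(x)·x at a boundary point. -/
def nderiv (u : ℂ → ℝ) (x : ℂ) : ℝ := x.re * pd u 1 x + x.im * pd u Complex.I x

/-- Tangential derivative ∂_τ u(x) = ∇u(x)·(−x₂,x₁) at a boundary point. -/
def tderiv (u : ℂ → ℝ) (x : ℂ) : ℝ := -x.im * pd u 1 x + x.re * pd u Complex.I x

/-- Unit-speed parametrization of the unit circle. -/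
def bpt (θ : ℝ) : ℂ := Complex.exp ((θ : ℂ) * Complex.I)

/-- Integral over ∂𝔻 with respect to arclength. -/
def bint (f : ℂ → ℝ) : ℝ := ∫ θ in (0:ℝ)..(2 * π), f (bpt θ)

/-- A solution of the prescribed curvature problem for `(K, h)`. -/
def IsSolution (K h u : ℂ → ℝ) : Prop :=
  ContDiff ℝ 2 u ∧
  (∀ x ∈ unitDisk, -lap u x = 2 * K x * Real.exp (u x)) ∧
  (∀ x ∈ unitCircle, nderiv u x + 2 = 2 * h x * Real.exp (u x / 2))

/-- The auxiliary function Φ = H + √(H² + K). -/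
def Phi (K H : ℂ → ℝ) (x : ℂ) : ℝ := H x + Real.sqrt (H x ^ 2 + K x)

/-- `H` is the harmonic extension of `h`, C¹ up to the boundary. -/
def IsHarmExt (h H : ℂ → ℝ) : Prop :=
  ContDiff ℝ 1 H ∧ ContDiffOn ℝ 2 H unitDisk ∧
  (∀ x ∈ unitDisk, lap H x = 0) ∧ ∀ x ∈ unitCircle, H x = h x

/-- K_ε. -/
def Keps (K : ℂ → ℝ) (ε : ℝ) (x : ℂ) : ℝ := (K x - ε / 2) / (1 + ε)

/-- h_ε. -/
def heps (h : ℂ → ℝ) (ε : ℝ) (x : ℂ) : ℝ := h x / (1 + ε)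

/-- K̃_ε. -/
def Ktil (ε : ℝ) : ℝ := -ε / (2 * (1 + ε))

/-- h̃_ε. -/
def htil (ε : ℝ) : ℝ := 1 / (1 + ε)

/-- A solution of the perturbed problem (P_ε). -/
def IsPerturbedSolution (K h : ℂ → ℝ) (ε : ℝ) (u : ℂ → ℝ) : Prop :=
  ContDiff ℝ 2 u ∧
  (∀ x ∈ unitDisk, -lap u x + 2 * Ktil ε = 2 * Keps K ε x * Real.exp (u x)) ∧
  (∀ x ∈ unitCircle, nderiv u x + 2 * htil ε = 2 * heps h ε x * Real.exp (u x / 2))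

/-- The energy functional I. -/
def Ifun (K h u : ℂ → ℝ) : ℝ :=
  (∫ x in unitDisk, ((1/2) * gradSq u x - 2 * K x * Real.exp (u x))) +
  bint (fun x => 2 * u x - 4 * h x * Real.exp (u x / 2))

/-- The perturbation term T. -/
def Tfun (u : ℂ → ℝ) : ℝ :=
  ∫ x in unitDisk, ((1/2) * gradSq u x + Real.exp (u x) - u x)

/-- The perturbed functional I_ε. -/
def Ieps (K h : ℂ → ℝ) (ε : ℝ) (u : ℂ → ℝ) : ℝ := (Ifun K h u + ε * Tfun u) / (1 + ε)

/-- The bubble for constant curvatures K ≡ −1, geodesic curvature 𝔥, with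
φ = 𝔥 + √(𝔥² − 1): u_a(x) = 2 log( 2φ(1−|a|²) / (φ²|1−āx|² − |x−a|²) ). -/
def bubbleNeg (φ : ℝ) (a x : ℂ) : ℝ :=
  2 * Real.log (2 * φ * (1 - ‖a‖ ^ 2) /
    (φ ^ 2 * ‖1 - (starRingEnd ℂ) a * x‖ ^ 2 - ‖x - a‖ ^ 2))

def Dq (A B C p q : ℝ) (x : ℂ) : ℝ :=
  A * (x.re * x.re + x.im * x.im) - 2 * B * (p * x.re + q * x.im) + C

lemma Dq_hasFDerivAt (A B C p q : ℝ) (x : ℂ) :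
    HasFDerivAt (Dq A B C p q)
      ((2 * A * x.re - 2 * B * p) • Complex.reCLM + (2 * A * x.im - 2 * B * q) • Complex.imCLM) x := by
  have h1 : HasFDerivAt (fun y : ℂ => y.re) Complex.reCLM x := Complex.reCLM.hasFDerivAt
  have h2 : HasFDerivAt (fun y : ℂ => y.im) Complex.imCLM x := Complex.imCLM.hasFDerivAt
  have h := ((((h1.mul h1).add (h2.mul h2)).const_mul A).sub
    (((h1.const_mul p).add (h2.const_mul q)).const_mul (2 * B))).add_const C
  refine HasFDerivAt.congr_fderiv h ?_
  ext v <;> simp <;> ring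

lemma Dq_contDiff (A B C p q : ℝ) : ContDiff ℝ (⊤ : ℕ∞) (Dq A B C p q) := by
  have h1 : ContDiff ℝ (⊤ : ℕ∞) (fun y : ℂ => y.re) := Complex.reCLM.contDiff
  have h2 : ContDiff ℝ (⊤ : ℕ∞) (fun y : ℂ => y.im) := Complex.imCLM.contDiff
  unfold Dq
  fun_prop

lemma Dq_eq (φ : ℝ) (a x : ℂ) :
    φ ^ 2 * ‖1 - (starRingEnd ℂ) a * x‖ ^ 2 - ‖x - a‖ ^ 2 =
      Dq (φ ^ 2 * ‖a‖ ^ 2 - 1) (φ ^ 2 - 1) (φ ^ 2 - ‖a‖ ^ 2) a.re a.im x := by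
  simp only [Dq, Complex.sq_norm, Complex.normSq_apply]
  simp
  ring

lemma u_hasFDerivAt (c A B C p q : ℝ) (hc : c ≠ 0) (x : ℂ) (hx : Dq A B C p q x ≠ 0) :
    HasFDerivAt (fun y => 2 * Real.log (c / Dq A B C p q y))
      ((-2 / Dq A B C p q x) • ((2 * A * x.re - 2 * B * p) • Complex.reCLM
        + (2 * A * x.im - 2 * B * q) • Complex.imCLM)) x := by
  have hD := Dq_hasFDerivAt A B C p q x
  have h := (((hD.log hx).const_sub (Real.log c)).const_mul 2)
  have h' : HasFDerivAt (fun y => 2 * (Real.log c - Real.log (Dq A B C p q y)))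
      ((-2 / Dq A B C p q x) • ((2 * A * x.re - 2 * B * p) • Complex.reCLM
        + (2 * A * x.im - 2 * B * q) • Complex.imCLM)) x := by
    refine HasFDerivAt.congr_fderiv h ?_
    rw [smul_neg, smul_smul, ← neg_smul]
    congr 1
    ring
  refine h'.congr_of_eventuallyEq ?_
  filter_upwards [(Dq_contDiff A B C p q).continuous.continuousAt.eventually_ne hx] with y hy
  rw [Real.log_div hc hy]

lemma pd_u (c A B C p q : ℝ) (hc : c ≠ 0) (x : ℂ) (hx : Dq A B C p q x ≠ 0) (v : ℂ) :
    pd (fun y => 2 * Real.log (c / Dq A B C p q y)) v x =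
      (-2) * ((2 * A * x.re - 2 * B * p) * v.re + (2 * A * x.im - 2 * B * q) * v.im)
        / Dq A B C p q x := by
  unfold pd
  rw [(u_hasFDerivAt c A B C p q hc x hx).fderiv]
  simp
  ring

lemma pd2_u (c A B C p q : ℝ) (hc : c ≠ 0) (x : ℂ) (hx : Dq A B C p q x ≠ 0) (v : ℂ) :
    fderiv ℝ (fun z => pd (fun y => 2 * Real.log (c / Dq A B C p q y)) v z) x v =
      (-4) * A * (v.re ^ 2 + v.im ^ 2) / Dq A B C p q x +
      2 * ((2 * A * x.re - 2 * B * p) * v.re + (2 * A * x.im - 2 * B * q) * v.im) ^ 2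
        / Dq A B C p q x ^ 2 := by
  have he : (fun z => pd (fun y => 2 * Real.log (c / Dq A B C p q y)) v z) =ᶠ[nhds x]
      fun z => ((-2) * ((2 * A * z.re - 2 * B * p) * v.re + (2 * A * z.im - 2 * B * q) * v.im))
        * (Dq A B C p q z)⁻¹ := by
    filter_upwards [(Dq_contDiff A B C p q).continuous.continuousAt.eventually_ne hx] with y hy
    rw [pd_u c A B C p q hc y hy v, div_eq_mul_inv]
  rw [he.fderiv_eq]
  have h1 : HasFDerivAt (fun y : ℂ => y.re) Complex.reCLM x := Complex.reCLM.hasFDerivAt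
  have h2 : HasFDerivAt (fun y : ℂ => y.im) Complex.imCLM x := Complex.imCLM.hasFDerivAt
  have hN := (((((h1.const_mul (2 * A)).sub_const (2 * B * p)).mul_const v.re).add
    (((h2.const_mul (2 * A)).sub_const (2 * B * q)).mul_const v.im)).const_mul (-2))
  have hI := (hasDerivAt_inv hx).comp_hasFDerivAt x (Dq_hasFDerivAt A B C p q x)
  have h := hN.mul hI
  have h' := h.fderiv
  simp only [Pi.mul_def, Function.comp_def, Pi.add_def] at h'
  rw [h']
  simp
  field_simp
  ring

/-- The bubbles u_a are smooth on the closed disk and solve the problem with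
K ≡ −1 and constant geodesic curvature 𝔥. -/
theorem bubble_is_solution
    (𝔥 : ℝ) (h𝔥 : 1 < 𝔥) (φ : ℝ) (hφ : φ = 𝔥 + Real.sqrt (𝔥 ^ 2 - 1))
    (a : ℂ) (ha : a ∈ unitDisk) :
    (∀ x ∈ closedUnitDisk,
      0 < φ ^ 2 * ‖1 - (starRingEnd ℂ) a * x‖ ^ 2 - ‖x - a‖ ^ 2) ∧
    ContDiffOn ℝ (⊤ : ℕ∞) (bubbleNeg φ a) closedUnitDisk ∧
    (∀ x ∈ unitDisk, -lap (bubbleNeg φ a) x = -2 * Real.exp (bubbleNeg φ a x)) ∧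
    (∀ x ∈ unitCircle,
      nderiv (bubbleNeg φ a) x + 2 = 2 * 𝔥 * Real.exp (bubbleNeg φ a x / 2)) := by
  have hr : ‖a‖ ^ 2 < 1 := by
    have : ‖a‖ < 1 := by simpa [unitDisk] using ha
    nlinarith [norm_nonneg a]
  have hs : 0 < Real.sqrt (𝔥 ^ 2 - 1) := Real.sqrt_pos.mpr (by nlinarith)
  have hsq : Real.sqrt (𝔥 ^ 2 - 1) ^ 2 = 𝔥 ^ 2 - 1 := Real.sq_sqrt (by nlinarith)
  have hφ1 : 1 < φ := by linarith
  have hφe : 2 * 𝔥 * φ = φ ^ 2 + 1 := by rw [hφ]; linear_combination -hsq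
  have hc : 0 < 2 * φ * (1 - ‖a‖ ^ 2) := by
    have : 0 < 1 - ‖a‖ ^ 2 := by linarith
    positivity
  have hpos : ∀ x ∈ closedUnitDisk,
      0 < φ ^ 2 * ‖1 - (starRingEnd ℂ) a * x‖ ^ 2 - ‖x - a‖ ^ 2 := by
    intro x hx
    have hx1 : ‖x‖ ≤ 1 := by simpa [closedUnitDisk] using hx
    have hx2 : ‖x‖ ^ 2 ≤ 1 := by nlinarith [norm_nonneg x]
    have hid : ‖1 - (starRingEnd ℂ) a * x‖ ^ 2 - ‖x - a‖ ^ 2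
        = (1 - ‖a‖ ^ 2) * (1 - ‖x‖ ^ 2) := by
      simp only [Complex.sq_norm, Complex.normSq_apply]
      simp
      ring
    have h0 : 0 < ‖1 - (starRingEnd ℂ) a * x‖ ^ 2 := by
      have : ‖(starRingEnd ℂ) a * x‖ < 1 := by
        rw [norm_mul, Complex.norm_conj]
        nlinarith [norm_nonneg a, norm_nonneg x]
      have h3 : 1 - (starRingEnd ℂ) a * x ≠ 0 := by
        intro h
        rw [← sub_eq_zero.mp h] at this
        simp at this
      have := norm_pos_iff.mpr h3
      positivity
    have h4 : 0 ≤ (1 - ‖a‖ ^ 2) * (1 - ‖x‖ ^ 2) :=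
      mul_nonneg (by linarith) (by linarith)
    have h5 : 0 < (φ ^ 2 - 1) * ‖1 - (starRingEnd ℂ) a * x‖ ^ 2 :=
      mul_pos (by nlinarith) h0
    linarith
  have hu : bubbleNeg φ a = fun y => 2 * Real.log (2 * φ * (1 - ‖a‖ ^ 2) /
      Dq (φ ^ 2 * ‖a‖ ^ 2 - 1) (φ ^ 2 - 1) (φ ^ 2 - ‖a‖ ^ 2) a.re a.im y) := by
    funext y
    rw [bubbleNeg, Dq_eq]
  refine ⟨hpos, ?_, ?_, ?_⟩
  all_goals
    simp only [Dq_eq] at hpos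
    rw [hu]
  · refine contDiffOn_const.mul (ContDiffOn.log (contDiffOn_const.div
      (Dq_contDiff _ _ _ _ _).contDiffOn fun x hx => (hpos x hx).ne') fun x hx =>
        (div_pos hc (hpos x hx)).ne')
  · intro x hx
    have hD := hpos x (Metric.ball_subset_closedBall hx)
    unfold lap
    rw [pd2_u _ _ _ _ _ _ hc.ne' x hD.ne', pd2_u _ _ _ _ _ _ hc.ne' x hD.ne']
    have hE : ∀ t : ℝ, 0 < t → Real.exp (2 * Real.log t) = t ^ 2 := by
      intro t ht
      rw [two_mul, Real.exp_add, Real.exp_log ht, sq]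
    rw [hE _ (div_pos hc hD)]
    have hDd : Dq (φ ^ 2 * ‖a‖ ^ 2 - 1) (φ ^ 2 - 1) (φ ^ 2 - ‖a‖ ^ 2) a.re a.im x = _ := rfl
    conv_rhs at hDd => unfold Dq
    have hn : ‖a‖ ^ 2 = a.re * a.re + a.im * a.im := by
      rw [Complex.sq_norm, Complex.normSq_apply]
    generalize Dq (φ ^ 2 * ‖a‖ ^ 2 - 1) (φ ^ 2 - 1) (φ ^ 2 - ‖a‖ ^ 2) a.re a.im x = D at *
    simp only [Complex.one_re, Complex.one_im, Complex.I_re, Complex.I_im]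
    field_simp
    rw [hDd, hn]
    ring
  · intro x hx
    have hD := hpos x (Metric.sphere_subset_closedBall hx)
    unfold nderiv
    rw [pd_u _ _ _ _ _ _ hc.ne' x hD.ne', pd_u _ _ _ _ _ _ hc.ne' x hD.ne']
    have hE : ∀ t : ℝ, 0 < t → Real.exp (2 * Real.log t / 2) = t := by
      intro t ht
      rw [mul_div_cancel_left₀ _ two_ne_zero, Real.exp_log ht]
    beta_reduce
    rw [hE _ (div_pos hc hD)]
    have hx1 : x.re * x.re + x.im * x.im = 1 := by
      have : ‖x‖ = 1 := by simpa [unitCircle] using hx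
      rw [← Complex.normSq_apply, ← Complex.sq_norm, this, one_pow]
    have hDd : Dq (φ ^ 2 * ‖a‖ ^ 2 - 1) (φ ^ 2 - 1) (φ ^ 2 - ‖a‖ ^ 2) a.re a.im x = _ := rfl
    conv_rhs at hDd => unfold Dq
    generalize Dq (φ ^ 2 * ‖a‖ ^ 2 - 1) (φ ^ 2 - 1) (φ ^ 2 - ‖a‖ ^ 2) a.re a.im x = D at *
    simp only [Complex.one_re, Complex.one_im, Complex.I_re, Complex.I_im]
    have hkey : -4 * ((φ ^ 2 * ‖a‖ ^ 2 - 1) - (φ ^ 2 - 1) * (a.re * x.re + a.im * x.im)) + 2 * D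
        = 2 * (2 * 𝔥 * φ) * (1 - ‖a‖ ^ 2) := by
      rw [hφe, hDd, hx1]; ring
    field_simp
    linear_combination hkey / 2 - 2 * (φ ^ 2 * ‖a‖ ^ 2 - 1) * hx1

end
end

section
/- Let 𝔥 > 1, set φ = 𝔥 + √(𝔥² − 1), and for a ∈ 𝔻 let u_a(x) = 2 log( 2φ(1−|a|²) / (φ²|1−āx|² − |x−a|²) ). Then for every a ∈ 𝔻: ∫_{∂𝔻} e^{u_a/2} ds = 2π/√(𝔥² − 1) and ∫_𝔻 e^{u_a} dx = 2π( 𝔥/√(𝔥² − 1) − 1 ); in particular both integrals are independent of a. -/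
open MeasureTheory Real Filter

noncomputable section

lemma bm_ident (a x : ℂ) : ‖1 - (starRingEnd ℂ) a * x‖ ^ 2 - ‖x - a‖ ^ 2
    = (1 - ‖a‖ ^ 2) * (1 - ‖x‖ ^ 2) := by
  simp only [← Complex.normSq_eq_norm_sq, Complex.normSq_apply]
  simp
  ring

lemma bm_den_pos {a x : ℂ} (ha : ‖a‖ < 1) (hx : ‖x‖ ≤ 1) : 0 < ‖1 - (starRingEnd ℂ) a * x‖ := by
  rw [norm_pos_iff]
  intro h
  have h1 : (starRingEnd ℂ) a * x = 1 := (sub_eq_zero.mp h).symm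
  have h2 : ‖a‖ * ‖x‖ = 1 := by
    have := congrArg norm h1
    simpa using this
  nlinarith [norm_nonneg a, norm_nonneg x]

lemma bm_exp {φ : ℝ} (hφ : 1 < φ) {a x : ℂ} (ha : ‖a‖ < 1) (hx : ‖x‖ ≤ 1) :
    0 < 2 * φ * (1 - ‖a‖ ^ 2) /
    (φ ^ 2 * ‖1 - (starRingEnd ℂ) a * x‖ ^ 2 - ‖x - a‖ ^ 2) := by
  have h1 := bm_den_pos ha hx
  have h2 := bm_ident a x
  have h3 : 0 < 1 - ‖a‖ ^ 2 := by nlinarith [norm_nonneg a]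
  have h4 : 0 ≤ 1 - ‖x‖ ^ 2 := by nlinarith [norm_nonneg x]
  have h5 : 0 < (φ ^ 2 - 1) * ‖1 - (starRingEnd ℂ) a * x‖ ^ 2 := by
    apply mul_pos (by nlinarith) (by positivity)
  have h6 := mul_nonneg h3.le h4
  apply div_pos (by positivity)
  nlinarith

lemma bm_circle {a : ℂ} (ha : ‖a‖ < 1) :
    ∫ θ in (0:ℝ)..(2 * π), (1 - ‖a‖ ^ 2) / ‖bpt θ - a‖ ^ 2 = 2 * π := by
  have h := DiffContOnCl.circleAverage_re_herglotzRieszKernel_smul (f := fun _ : ℂ => (1:ℂ)) (R := 1) (c := 0)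
    (w := a) ?_ (by simpa using ha)
  · rw [← poissonKernel_eq_re_herglotzRieszKernel] at h
    rw [Real.circleAverage] at h
    have h' : ((∫ θ in (0:ℝ)..(2 * π), (1 - ‖a‖ ^ 2) / ‖bpt θ - a‖ ^ 2 : ℝ) : ℂ) =
      ∫ θ in (0:ℝ)..(2 * π), (poissonKernel 0 a • fun _ : ℂ => (1:ℂ)) (circleMap 0 1 θ) := by
      rw [← intervalIntegral.integral_ofReal]
      congr 1
      ext θ
      simp [poissonKernel_def, circleMap, bpt, Complex.norm_exp_ofReal_mul_I]
    rw [← h'] at h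
    have hp := Real.pi_pos
    rw [inv_smul_eq_iff₀ (by positivity)] at h
    have h2 := congrArg Complex.re h
    simpa using h2
  · exact diffContOnCl_const

lemma bm_det (c : ℂ) : ((ContinuousLinearMap.toSpanSingleton ℂ c).restrictScalars ℝ).det = ‖c‖ ^ 2 := by
  simp [ContinuousLinearMap.det, LinearMap.det_restrictScalars, Algebra.norm_complex_eq, Complex.normSq_eq_norm_sq]

lemma bm_image {a : ℂ} (ha : ‖a‖ < 1) :
    (fun x : ℂ => (x - a) / (1 - (starRingEnd ℂ) a * x)) '' unitDisk = unitDisk := by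
  have key : ∀ b : ℂ, ‖b‖ < 1 → ∀ x : ℂ, ‖x‖ < 1 → ‖(x - b) / (1 - (starRingEnd ℂ) b * x)‖ < 1 := by
    intro b hb x hx
    have h1 := bm_den_pos hb hx.le
    rw [norm_div, div_lt_one h1]
    have h2 := bm_ident b x
    have h3 : 0 < 1 - ‖b‖ ^ 2 := by nlinarith [norm_nonneg b]
    have h4 : 0 < 1 - ‖x‖ ^ 2 := by nlinarith [norm_nonneg x]
    have := mul_pos h3 h4
    apply lt_of_pow_lt_pow_left₀ 2 h1.le
    linarith
  ext y
  simp only [unitDisk, Set.mem_image, mem_ball_zero_iff]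
  constructor
  · rintro ⟨x, hx, rfl⟩
    exact key a ha x hx
  · intro hy
    refine ⟨(y + a) / (1 + (starRingEnd ℂ) a * y), ?_, ?_⟩
    · have := key (-a) (by simpa using ha) y hy
      simpa using this
    · have h1 := bm_den_pos (a := -a) (by simpa using ha) hy.le
      have h1' : 1 + (starRingEnd ℂ) a * y ≠ 0 := by
        have := norm_pos_iff.mp h1
        simpa using this
      have h2 := bm_den_pos ha ha.le
      have h2' : 1 - (starRingEnd ℂ) a * a ≠ 0 := norm_pos_iff.mp h2
      have e1 : (y + a) / (1 + (starRingEnd ℂ) a * y) - a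
          = y * (1 - (starRingEnd ℂ) a * a) / (1 + (starRingEnd ℂ) a * y) := by
        generalize (starRingEnd ℂ) a = b at *
        rw [eq_div_iff h1', sub_mul, div_mul_cancel₀ _ h1']; ring
      have e2 : 1 - (starRingEnd ℂ) a * ((y + a) / (1 + (starRingEnd ℂ) a * y))
          = (1 - (starRingEnd ℂ) a * a) / (1 + (starRingEnd ℂ) a * y) := by
        generalize (starRingEnd ℂ) a = b at *
        rw [eq_div_iff h1', sub_mul, mul_assoc, div_mul_cancel₀ _ h1']; ring
      rw [e1, e2, div_div_div_cancel_right₀ h1', mul_div_cancel_right₀ _ h2']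

lemma bm_inj {a : ℂ} (ha : ‖a‖ < 1) :
    Set.InjOn (fun x : ℂ => (x - a) / (1 - (starRingEnd ℂ) a * x)) unitDisk := by
  intro x hx y hy h
  simp only [unitDisk, mem_ball_zero_iff] at hx hy
  have h1 := norm_pos_iff.mp (bm_den_pos ha hx.le)
  have h2 := norm_pos_iff.mp (bm_den_pos ha hy.le)
  have h3 := norm_pos_iff.mp (bm_den_pos ha ha.le)
  simp only at h
  rw [div_eq_div_iff h1 h2] at h
  have : (x - y) * (1 - (starRingEnd ℂ) a * a) = 0 := by linear_combination h
  rcases mul_eq_zero.mp this with h | h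
  · exact sub_eq_zero.mp h
  · exact absurd h h3

lemma bm_deriv {a x : ℂ} (ha : ‖a‖ < 1) (hx : ‖x‖ < 1) :
    HasDerivAt (fun x : ℂ => (x - a) / (1 - (starRingEnd ℂ) a * x))
      ((1 - (starRingEnd ℂ) a * a) / (1 - (starRingEnd ℂ) a * x) ^ 2) x := by
  have h1 := norm_pos_iff.mp (bm_den_pos ha hx.le)
  have hd : HasDerivAt (fun x : ℂ => 1 - (starRingEnd ℂ) a * x) (-((starRingEnd ℂ) a)) x := by
    simpa using ((hasDerivAt_id x).const_mul ((starRingEnd ℂ) a)).const_sub 1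
  have := ((hasDerivAt_id x).sub_const a).div hd h1
  refine HasDerivAt.congr_deriv this ?_
  congr 1
  simp only [id]
  ring

lemma bm_radial {φ : ℝ} (hφ : 1 < φ) :
    ∫ w in unitDisk, 4 * φ ^ 2 / (φ ^ 2 - ‖w‖ ^ 2) ^ 2 = 4 * π / (φ ^ 2 - 1) := by
  have h1 : ∫ w in unitDisk, 4 * φ ^ 2 / (φ ^ 2 - ‖w‖ ^ 2) ^ 2
      = ∫ w : ℂ, (fun r : ℝ => (Set.Iio (1:ℝ)).indicator (fun r => 4 * φ ^ 2 / (φ ^ 2 - r ^ 2) ^ 2) r) ‖w‖ := by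
    rw [← integral_indicator (by exact measurableSet_ball)]
    congr 1
    ext w
    by_cases hw : ‖w‖ < 1
    · rw [Set.indicator_of_mem (by simpa [unitDisk] using hw)]
      simp only
      rw [Set.indicator_of_mem (by simpa using hw)]
    · rw [Set.indicator_of_notMem (by simpa [unitDisk] using hw)]
      simp only
      rw [Set.indicator_of_notMem (by simpa using hw)]
  have hF : ∀ r ∈ Set.uIcc (0:ℝ) 1, HasDerivAt (fun r : ℝ => 2 * φ ^ 2 / (φ ^ 2 - r ^ 2))
      (r * (4 * φ ^ 2 / (φ ^ 2 - r ^ 2) ^ 2)) r := by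
    intro r hr
    rw [Set.uIcc_of_le zero_le_one] at hr
    have hne : φ ^ 2 - r ^ 2 ≠ 0 := by nlinarith [hr.1, hr.2]
    have hd : HasDerivAt (fun r : ℝ => φ ^ 2 - r ^ 2) (-(2 * r)) r := by
      simpa using (hasDerivAt_pow 2 r).const_sub (φ ^ 2)
    have := (hasDerivAt_const r (2 * φ ^ 2)).div hd hne
    refine HasDerivAt.congr_deriv this ?_
    rw [← mul_div_assoc]
    congr 1
    ring
  have h2 : ∫ r in (0:ℝ)..1, r * (4 * φ ^ 2 / (φ ^ 2 - r ^ 2) ^ 2) = 2 / (φ ^ 2 - 1) := by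
    rw [intervalIntegral.integral_eq_sub_of_hasDerivAt hF]
    · have : φ ^ 2 - 1 ≠ 0 := by nlinarith
      have : φ ≠ 0 := by linarith
      simp
      field_simp
      ring
    · apply ContinuousOn.intervalIntegrable
      intro r hr
      rw [Set.uIcc_of_le zero_le_one] at hr
      have hne : φ ^ 2 - r ^ 2 ≠ 0 := by nlinarith [hr.1, hr.2]
      apply ContinuousAt.continuousWithinAt
      fun_prop (disch := exact pow_ne_zero _ hne)
  have h3 : ∫ y in Set.Ioi (0:ℝ), y * (Set.Iio (1:ℝ)).indicator (fun r => 4 * φ ^ 2 / (φ ^ 2 - r ^ 2) ^ 2) y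
      = 2 / (φ ^ 2 - 1) := by
    rw [← h2, intervalIntegral.integral_of_le zero_le_one, integral_Ioc_eq_integral_Ioo,
      ← Set.Ioi_inter_Iio, ← setIntegral_indicator measurableSet_Iio]
    congr 1
    ext y
    simp only [Set.indicator_apply]
    split_ifs <;> simp
  rw [h1, integral_fun_norm_addHaar]
  simp only [Complex.finrank_real_complex, smul_eq_mul, nsmul_eq_mul]
  norm_num
  rw [h3]
  simp [Measure.real]
  ring

lemma bm_area {φ : ℝ} (hφ : 1 < φ) {a : ℂ} (ha : ‖a‖ < 1) :
    ∫ x in unitDisk, Real.exp (bubbleNeg φ a x) = 4 * π / (φ ^ 2 - 1) := by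
  rw [← bm_radial hφ]
  conv_rhs => rw [← bm_image ha]
  rw [integral_image_eq_integral_abs_det_fderiv_smul volume
    (f' := fun x => (ContinuousLinearMap.toSpanSingleton ℂ
      ((1 - (starRingEnd ℂ) a * a) / (1 - (starRingEnd ℂ) a * x) ^ 2)).restrictScalars ℝ)
    (by exact measurableSet_ball) _ (bm_inj ha)]
  · apply setIntegral_congr_fun (by exact measurableSet_ball)
    intro x hx
    simp only [unitDisk, mem_ball_zero_iff] at hx
    have h0 := bm_exp hφ ha hx.le
    have hD := bm_den_pos ha hx.le
    have hN : ‖1 - (starRingEnd ℂ) a * a‖ = 1 - ‖a‖ ^ 2 := by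
      have h3 : 0 < 1 - ‖a‖ ^ 2 := by nlinarith [norm_nonneg a]
      have : (1 - (starRingEnd ℂ) a * a) = ((1 - ‖a‖ ^ 2 : ℝ) : ℂ) := by
        rw [mul_comm, Complex.mul_conj, Complex.normSq_eq_norm_sq]; push_cast; ring
      rw [this, Complex.norm_real, Real.norm_eq_abs, abs_of_pos h3]
    simp only [bm_det, smul_eq_mul, bubbleNeg]
    rw [two_mul, Real.exp_add, Real.exp_log h0, abs_of_nonneg (by positivity)]
    rw [norm_div, norm_div, norm_pow, hN]
    have hne : φ ^ 2 * ‖1 - (starRingEnd ℂ) a * x‖ ^ 2 - ‖x - a‖ ^ 2 ≠ 0 := by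
      intro h; rw [h] at h0; simp at h0
    have e : φ ^ 2 - (‖x - a‖ / ‖1 - (starRingEnd ℂ) a * x‖) ^ 2
      = (φ ^ 2 * ‖1 - (starRingEnd ℂ) a * x‖ ^ 2 - ‖x - a‖ ^ 2) / ‖1 - (starRingEnd ℂ) a * x‖ ^ 2 := by
      rw [eq_div_iff (by positivity), sub_mul, div_pow, div_mul_cancel₀ _ (by positivity)]
    rw [e]
    generalize φ ^ 2 * ‖1 - (starRingEnd ℂ) a * x‖ ^ 2 - ‖x - a‖ ^ 2 = q at *
    generalize ‖1 - (starRingEnd ℂ) a * x‖ = d at *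
    field_simp
    ring
  · intro x hx
    simp only [unitDisk, mem_ball_zero_iff] at hx
    exact ((bm_deriv ha hx).hasFDerivAt.restrictScalars ℝ).hasFDerivWithinAt

/-- Length and area of the bubbles: both integrals are independent of a. -/
theorem bubble_mass
    (𝔥 : ℝ) (h𝔥 : 1 < 𝔥) (φ : ℝ) (hφ : φ = 𝔥 + Real.sqrt (𝔥 ^ 2 - 1))
    (a : ℂ) (ha : a ∈ unitDisk) :
    bint (fun x => Real.exp (bubbleNeg φ a x / 2)) = 2 * π / Real.sqrt (𝔥 ^ 2 - 1) ∧
    (∫ x in unitDisk, Real.exp (bubbleNeg φ a x))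
      = 2 * π * (𝔥 / Real.sqrt (𝔥 ^ 2 - 1) - 1) := by
  have ha' : ‖a‖ < 1 := by simpa [unitDisk] using ha
  have hs2 : 0 < 𝔥 ^ 2 - 1 := by nlinarith
  have hs : 0 < Real.sqrt (𝔥 ^ 2 - 1) := Real.sqrt_pos.mpr hs2
  have hsq : Real.sqrt (𝔥 ^ 2 - 1) ^ 2 = 𝔥 ^ 2 - 1 := Real.sq_sqrt hs2.le
  set s := Real.sqrt (𝔥 ^ 2 - 1) with hsdef
  have hφ1 : 1 < φ := by linarith
  have hφ2 : φ ^ 2 - 1 = 2 * φ * s := by rw [hφ]; nlinarith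
  constructor
  · conv_rhs => rw [← bm_circle ha']
    rw [bint, ← intervalIntegral.integral_div]
    congr 1
    ext θ
    have hx : ‖bpt θ‖ = 1 := by simp [bpt, Complex.norm_exp_ofReal_mul_I]
    have h0 := bm_exp hφ1 ha' hx.le
    have hi := bm_ident a (bpt θ)
    have hD := bm_den_pos ha' hx.le
    rw [hx] at hi
    have hi' : ‖1 - (starRingEnd ℂ) a * bpt θ‖ ^ 2 = ‖bpt θ - a‖ ^ 2 := by linarith
    have hp : 0 < ‖bpt θ - a‖ ^ 2 := by rw [← hi']; positivity
    simp only [bubbleNeg]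
    rw [mul_div_cancel_left₀ _ two_ne_zero, Real.exp_log h0, hi']
    have e : φ ^ 2 * ‖bpt θ - a‖ ^ 2 - ‖bpt θ - a‖ ^ 2 = 2 * φ * s * ‖bpt θ - a‖ ^ 2 := by
      rw [← hφ2]; ring
    rw [e]
    have hφ0 : φ ≠ 0 := by linarith
    generalize ‖bpt θ - a‖ ^ 2 = d at *
    have := hp.ne'
    field_simp
  · rw [bm_area hφ1 ha', hφ2]
    have hφ0 : φ ≠ 0 := by linarith
    have e : 1 = φ * (𝔥 - s) := by rw [hφ]; linear_combination hsq
    field_simp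
    linear_combination 4 * e

end
end

section
/- Let a_n ∈ (0,1) with a_n → 1, and let (φ_n), (k_n) be real sequences with φ_n > 0 and k_n < 0 for all n, converging to limits φ_∞, k_∞ with φ_∞² + k_∞ > 0, and such that φ_n² + k_n ≥ δ̄ for some fixed δ̄ > 0 and all n. Define u_n(x₁,x₂) = 2 log( 2(1−a_n²)φ_n / ( φ_n²((1−a_n x₁)² + a_n² x₂²) + k_n((x₁−a_n)² + x₂²) ) ). Then lim_{n→∞} ∫_𝔻 x₁ u_n dx = π and lim_{n→∞} ∫_{∂𝔻} x₁ u_n ds = 4π. -/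
open MeasureTheory Real Filter

noncomputable section

/-- The blow-up bubble profile concentrating at (1,0). -/
def prof (aN φN kN : ℝ) (x : ℂ) : ℝ :=
  2 * Real.log (2 * (1 - aN ^ 2) * φN /
    (φN ^ 2 * ((1 - aN * x.re) ^ 2 + aN ^ 2 * x.im ^ 2)
      + kN * ((x.re - aN) ^ 2 + x.im ^ 2)))

lemma circ_log (r : ℝ) (h0 : 0 ≤ r) (h1 : r < 1) :
    ∫ θ in (0:ℝ)..(2 * π), Real.cos θ * Real.log (Complex.normSq (1 - circleMap 0 r θ))
      = -2 * π * r := by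
  rcases h0.eq_or_lt with rfl | hr
  · simp
  set f : ℂ → ℂ := fun z => Complex.log (1 - z) with hf
  have hslit : ∀ z ∈ Metric.ball (0:ℂ) 1, 1 - z ∈ Complex.slitPlane := by
    intro z hz
    left
    have : z.re ≤ ‖z‖ := Complex.re_le_norm z
    have h2 : ‖z‖ < 1 := by simpa using hz
    simp; linarith
  have hfd : DifferentiableOn ℂ f (Metric.ball 0 1) := by
    intro z hz
    apply DifferentiableAt.differentiableWithinAt
    apply DifferentiableAt.clog (by fun_prop) (hslit z hz)
  have hq : DifferentiableOn ℂ (dslope f 0) (Metric.ball 0 1) :=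
    (Complex.differentiableOn_dslope (Metric.ball_mem_nhds 0 one_pos)).mpr hfd
  set g : ℂ → ℂ := fun z => z * f z + (r:ℂ)^2 * dslope f 0 z with hg
  have hgd : DifferentiableOn ℂ g (Metric.ball 0 1) := by
    apply DifferentiableOn.add
    · exact differentiableOn_id.mul hfd
    · exact hq.const_mul _
  have habs : |r| = r := abs_of_pos hr
  have hsub : Metric.closedBall (0:ℂ) |r| ⊆ Metric.ball 0 1 := by
    rw [habs]; exact Metric.closedBall_subset_ball h1
  have havg : Real.circleAverage g 0 r = g 0 := by
    apply DiffContOnCl.circleAverage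
    apply DifferentiableOn.diffContOnCl
    exact hgd.mono (Metric.closure_ball_subset_closedBall.trans hsub)
  have hf0 : HasDerivAt f (-1) 0 := by
    have := ((hasDerivAt_id (0:ℂ)).const_sub 1).clog (by simp)
    simpa using this
  have hg0 : g 0 = -(r:ℂ)^2 := by
    simp [hg, dslope_same, hf0.deriv]
  have hgc : ∀ θ : ℝ, g (circleMap 0 r θ) = ((2 * r * Real.cos θ : ℝ) : ℂ) * f (circleMap 0 r θ) := by
    intro θ
    have hne : circleMap 0 r θ ≠ 0 := by simp [circleMap, hr.ne']
    have hrc : (r:ℂ) ≠ 0 := by exact_mod_cast hr.ne'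
    have e1 : Complex.exp (θ * Complex.I) * Complex.exp (-(θ * Complex.I)) = 1 := by
      rw [← Complex.exp_add]; simp
    have he : Complex.exp (θ * Complex.I) ≠ 0 := Complex.exp_ne_zero _
    have e2 : (Real.cos θ : ℂ) = (Complex.exp (θ * Complex.I) + Complex.exp (-(θ * Complex.I)))/2 := by
      rw [Complex.ofReal_cos, Complex.cos, neg_mul]
    have hf00 : f 0 = 0 := by simp [hf]
    simp only [hg]
    rw [dslope_of_ne _ hne, slope_def_field, hf00, sub_zero, sub_zero]
    push_cast at e2 ⊢
    rw [e2]
    generalize f (circleMap 0 r θ) = F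
    simp only [circleMap, zero_add]
    have e3 : Complex.exp (-(θ * Complex.I)) = (Complex.exp (θ * Complex.I))⁻¹ := Complex.exp_neg _
    rw [e3]
    field_simp
  have hcont : Continuous fun θ : ℝ => g (circleMap 0 r θ) := by
    have : ContinuousOn g (Metric.ball 0 1) := hgd.continuousOn
    apply this.comp_continuous (continuous_circleMap 0 r)
    intro θ
    simp [habs, h1]
  have hint : ∫ θ in (0:ℝ)..(2 * π), g (circleMap 0 r θ) = -(2 * π * r^2 : ℝ) := by
    rw [Real.circleAverage_def, hg0] at havg
    have hp : (2 * π : ℝ) ≠ 0 := by positivity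
    rw [inv_smul_eq_iff₀ hp] at havg
    rw [havg, Complex.real_smul]
    push_cast; ring
  have hre := Complex.reCLM.intervalIntegral_comp_comm (hcont.intervalIntegrable (μ := volume) 0 (2*π))
  rw [hint] at hre
  simp only [Complex.reCLM_apply] at hre
  have e4 : ∀ θ : ℝ, (g (circleMap 0 r θ)).re
      = r * (Real.cos θ * Real.log (Complex.normSq (1 - circleMap 0 r θ))) := by
    intro θ
    rw [hgc, Complex.re_ofReal_mul, hf, Complex.log_re, Complex.normSq_eq_norm_sq, Real.log_pow]
    push_cast; ring
  simp only [e4] at hre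
  rw [intervalIntegral.integral_const_mul, ← Complex.ofReal_neg, Complex.ofReal_re] at hre
  apply mul_left_cancel₀ hr.ne'
  rw [hre]; ring

lemma circ_log' (r : ℝ) (h0 : 0 ≤ r) (h1 : r < 1) :
    ∫ θ in (-π)..π, Real.cos θ * Real.log (Complex.normSq (1 - circleMap 0 r θ))
      = -2 * π * r := by
  rw [← circ_log r h0 h1]
  have hp : Function.Periodic
      (fun θ : ℝ => Real.cos θ * Real.log (Complex.normSq (1 - circleMap 0 r θ))) (2 * π) := by
    intro θ
    simp only [Real.cos_add_two_pi, periodic_circleMap 0 r θ]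
  have := hp.intervalIntegral_add_eq (-π) 0
  rw [zero_add] at this
  rw [← this]
  congr 1; ring

lemma bdry_int (a φ k : ℝ) (h0 : 0 < a) (h1 : a < 1) (hφ : 0 < φ) (hk : 0 < φ ^ 2 + k) :
    bint (fun x => x.re * prof a φ k x) = 4 * π * a := by
  have key : ∀ θ : ℝ, (bpt θ).re * prof a φ k (bpt θ) =
     (2 * (Real.log (2 * (1 - a^2) * φ) - Real.log (φ^2+k))) * Real.cos θ
      + (-2) * (Real.cos θ * Real.log (Complex.normSq (1 - circleMap 0 a θ))) := by
    intro θ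
    have hre : (bpt θ).re = Real.cos θ := by simp [bpt, Complex.exp_ofReal_mul_I_re]
    have him : (bpt θ).im = Real.sin θ := by simp [bpt, Complex.exp_ofReal_mul_I_im]
    have hN : Complex.normSq (1 - circleMap 0 a θ) = (1 - a * Real.cos θ)^2 + a^2 * Real.sin θ^2 := by
      have : circleMap 0 a θ = a * bpt θ := by simp [circleMap, bpt]
      rw [this, Complex.normSq_apply]
      simp [hre, him]; ring
    have hNpos : 0 < (1 - a * Real.cos θ)^2 + a^2 * Real.sin θ^2 := by
      have : 0 < 1 - a * Real.cos θ := by nlinarith [Real.cos_le_one θ, Real.neg_one_le_cos θ]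
      positivity
    have hsc := Real.sin_sq_add_cos_sq θ
    have hD : φ ^ 2 * ((1 - a * Real.cos θ) ^ 2 + a ^ 2 * Real.sin θ ^ 2)
      + k * ((Real.cos θ - a) ^ 2 + Real.sin θ ^ 2) = (φ^2+k) * ((1 - a * Real.cos θ)^2 + a^2 * Real.sin θ^2) := by
      linear_combination (k * (1 - a^2)) * hsc
    have ha2 : 0 < 1 - a^2 := by nlinarith
    rw [prof, hre, him, hD, hN, Real.log_div (by positivity) (by positivity), Real.log_mul hk.ne' hNpos.ne']
    ring
  rw [bint]
  simp only [key]
  have hc : Continuous fun θ : ℝ => Real.cos θ * Real.log (Complex.normSq (1 - circleMap 0 a θ)) := by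
    apply Real.continuous_cos.mul
    apply Continuous.log
    · exact Complex.continuous_normSq.comp (continuous_const.sub (continuous_circleMap 0 a))
    · intro θ h
      rw [Complex.normSq_eq_zero, sub_eq_zero] at h
      have : ‖circleMap 0 a θ‖ = 1 := by rw [← h]; simp
      simp [abs_of_pos h0] at this
      linarith
  rw [intervalIntegral.integral_add, intervalIntegral.integral_const_mul, intervalIntegral.integral_const_mul,
    circ_log a h0.le h1]
  · simp; ring
  · exact (by fun_prop : Continuous _).intervalIntegrable _ _
  · exact (hc.const_mul _).intervalIntegrable _ _

lemma ae_im_ne : ∀ᵐ x : ℂ, x.im ≠ 0 := by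
  have h1 : ∀ᵐ y : ℝ, y ≠ 0 := Measure.ae_ne volume 0
  have h2 : ∀ᵐ p : ℝ × ℝ, p.2 ≠ 0 :=
    (Measure.quasiMeasurePreserving_snd (μ := (volume : Measure ℝ)) (ν := (volume : Measure ℝ))).ae h1
  exact Complex.volume_preserving_equiv_real_prod.quasiMeasurePreserving.ae h2

lemma logim_int : IntegrableOn (fun x : ℂ => Real.log x.im) unitDisk := by
  have h1 : IntegrableOn Real.log (Set.Icc (-1:ℝ) 1) := by
    rw [integrableOn_Icc_iff_integrableOn_Ioc, ← intervalIntegrable_iff_integrableOn_Ioc_of_le (by norm_num)]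
    exact intervalIntegral.intervalIntegrable_log'
  have h2 : IntegrableOn (fun p : ℝ × ℝ => Real.log p.2) (Set.Icc (-1:ℝ) 1 ×ˢ Set.Icc (-1:ℝ) 1) := by
    rw [IntegrableOn, Measure.volume_eq_prod, ← Measure.prod_restrict]
    exact Integrable.comp_snd h1 _
  have h3 := (Complex.volume_preserving_equiv_real_prod.integrableOn_comp_preimage
    Complex.measurableEquivRealProd.measurableEmbedding).mpr h2
  apply IntegrableOn.mono_set h3
  intro x hx
  have hx1 : ‖x‖ < 1 := by simpa [unitDisk] using hx
  have a1 := abs_le.mp ((Complex.abs_re_le_norm x).trans hx1.le)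
  have a2 := abs_le.mp ((Complex.abs_im_le_norm x).trans hx1.le)
  exact ⟨a1, a2⟩

lemma meas_disk : MeasurableSet unitDisk := Metric.isOpen_ball.measurableSet

instance fin_disk : IsFiniteMeasure ((volume : Measure ℂ).restrict unitDisk) :=
  ⟨by rw [Measure.restrict_apply_univ]; exact measure_ball_lt_top⟩

lemma disk_norm {x : ℂ} (hx : x ∈ unitDisk) : ‖x‖ < 1 := by simpa [unitDisk] using hx

lemma disk_normSq {x : ℂ} (hx : x ∈ unitDisk) : x.re ^ 2 + x.im ^ 2 < 1 := by
  have h := disk_norm hx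
  have h2 := Complex.normSq_eq_norm_sq x
  rw [Complex.normSq_apply] at h2
  nlinarith [norm_nonneg x]

lemma disk_re {x : ℂ} (hx : x ∈ unitDisk) : |x.re| ≤ 1 :=
  (Complex.abs_re_le_norm x).trans (disk_norm hx).le

lemma re_int : IntegrableOn (fun x : ℂ => x.re) unitDisk := by
  apply Integrable.mono' (integrable_const (1:ℝ)) Complex.measurable_re.aestronglyMeasurable
  filter_upwards [ae_restrict_mem meas_disk] with x hx
  exact disk_re hx

lemma re_zero : ∫ x in unitDisk, x.re = 0 := by
  have h : ∫ x in unitDisk, x.re = ∫ x in unitDisk, (-x).re := by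
    rw [← integral_indicator meas_disk, ← integral_indicator meas_disk, ← integral_neg_eq_self]
    congr 1
    ext x
    simp [Set.indicator, unitDisk]
  simp only [Complex.neg_re, integral_neg] at h
  linarith

lemma bound_log {A m M y : ℝ} (hm : 0 < m) (hy : y ≠ 0) (h1 : m * y ^ 2 ≤ A) (h2 : A ≤ M) :
    |Real.log A| ≤ |Real.log M| + |Real.log m| + 2 * |Real.log y| := by
  have hpos : 0 < m * y^2 := by positivity
  have hA : 0 < A := hpos.trans_le h1
  have l1 := Real.log_le_log hpos h1
  have l2 := Real.log_le_log hA h2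
  rw [Real.log_mul hm.ne' (by positivity), Real.log_pow] at l1
  push_cast at l1
  rw [abs_le]
  constructor
  · linarith [neg_abs_le (Real.log m), neg_abs_le (Real.log y), abs_nonneg (Real.log M)]
  · linarith [le_abs_self (Real.log M), abs_nonneg (Real.log m), abs_nonneg (Real.log y)]

lemma bd_int (M m : ℝ) : IntegrableOn
    (fun x : ℂ => |Real.log M| + |Real.log m| + 2 * |Real.log x.im|) unitDisk := by
  apply Integrable.add (integrable_const _)
  exact (Integrable.abs logim_int).const_mul 2

lemma normSq_one_sub (x : ℂ) : Complex.normSq (1 - x) = (1 - x.re)^2 + x.im^2 := by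
  rw [Complex.normSq_apply]; simp; ring

lemma nlog_int : IntegrableOn (fun x : ℂ => x.re * Real.log (Complex.normSq (1 - x))) unitDisk := by
  apply Integrable.mono' (bd_int 4 1)
  · apply Measurable.aestronglyMeasurable
    apply Complex.measurable_re.mul
    apply Real.measurable_log.comp
    exact (Complex.continuous_normSq.comp (continuous_const.sub continuous_id)).measurable
  · filter_upwards [ae_restrict_mem meas_disk, ae_restrict_of_ae ae_im_ne] with x hx hy
    rw [normSq_one_sub, Real.norm_eq_abs, abs_mul]
    have h1 := disk_re hx
    have h2 := disk_normSq hx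
    have h3 := abs_le.mp h1
    have := bound_log (A := (1 - x.re)^2 + x.im^2) (m := 1) (M := 4) one_pos hy (by nlinarith) (by nlinarith)
    calc _ ≤ 1 * |Real.log ((1 - x.re)^2 + x.im^2)| := by gcongr
      _ ≤ _ := by rw [one_mul]; exact this

lemma disk_log : ∫ x in unitDisk, x.re * Real.log (Complex.normSq (1 - x)) = -π / 2 := by
  set F : ℂ → ℝ := unitDisk.indicator (fun x => x.re * Real.log (Complex.normSq (1 - x))) with hF
  have hFm : Measurable F := by
    apply Measurable.indicator _ meas_disk
    apply Complex.measurable_re.mul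
    apply Real.measurable_log.comp
    exact (Complex.continuous_normSq.comp (continuous_const.sub continuous_id)).measurable
  have hFi : Integrable F := (integrable_indicator_iff meas_disk).mpr nlog_int
  rw [← integral_indicator meas_disk, ← Complex.integral_comp_polarCoord_symm]
  change ∫ p in polarCoord.target, p.1 • F (Complex.polarCoord.symm p) = _
  have hsymm : ∀ p : ℝ × ℝ, Complex.polarCoord.symm p = circleMap 0 p.1 p.2 := by
    intro p
    rw [Complex.polarCoord_symm_apply, circleMap, zero_add, Complex.exp_mul_I]
    push_cast; rfl
  have hc : Continuous fun p : ℝ × ℝ => circleMap 0 p.1 p.2 := by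
    unfold circleMap; fun_prop
  simp only [hsymm]
  have hI : IntegrableOn (fun p : ℝ × ℝ => p.1 • F (circleMap 0 p.1 p.2)) polarCoord.target := by
    refine ⟨(measurable_fst.smul (hFm.comp hc.measurable)).aestronglyMeasurable, ?_⟩
    have h := Complex.lintegral_comp_polarCoord_symm (fun x => ‖F x‖ₑ)
    have h2 : ∫⁻ x, ‖F x‖ₑ < ⊤ := hFi.2
    rw [← h] at h2
    rw [HasFiniteIntegral]
    refine lt_of_le_of_lt (le_of_eq ?_) h2
    apply setLIntegral_congr_fun polarCoord.open_target.measurableSet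
    intro p hp
    simp only [hsymm, smul_eq_mul]
    rw [enorm_mul, Real.enorm_eq_ofReal (le_of_lt hp.1)]
  rw [polarCoord_target, Measure.volume_eq_prod] at hI ⊢
  rw [setIntegral_prod _ hI]
  have hinner : ∀ r ∈ Set.Ioi (0:ℝ), ∫ θ in Set.Ioo (-π) π, r • F (circleMap 0 r θ)
      = (Set.Ioo (0:ℝ) 1).indicator (fun r => -2 * π * r^3) r := by
    intro r hr
    have hr : 0 < r := hr
    rw [← integral_Ioc_eq_integral_Ioo, ← intervalIntegral.integral_of_le (by linarith [Real.pi_pos])]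
    by_cases h : r < 1
    · have : ∀ θ : ℝ, r • F (circleMap 0 r θ)
          = r^2 * (Real.cos θ * Real.log (Complex.normSq (1 - circleMap 0 r θ))) := by
        intro θ
        have hm : circleMap 0 r θ ∈ unitDisk := by simp [unitDisk, abs_of_pos hr, h]
        have hre : (circleMap 0 r θ).re = r * Real.cos θ := by
          simp [circleMap, Complex.exp_ofReal_mul_I_re]
        rw [hF, Set.indicator_of_mem hm, hre, smul_eq_mul]; ring
      simp only [this]
      rw [intervalIntegral.integral_const_mul, circ_log' r hr.le h, Set.indicator_of_mem (show r ∈ Set.Ioo (0:ℝ) 1 from ⟨hr, h⟩)]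
      ring
    · have : ∀ θ : ℝ, r • F (circleMap 0 r θ) = 0 := by
        intro θ
        have hm : circleMap 0 r θ ∉ unitDisk := by simpa [unitDisk, abs_of_pos hr] using h
        rw [hF, Set.indicator_of_notMem hm, smul_zero]
      simp only [this]
      rw [Set.indicator_of_notMem (fun hh => h hh.2)]
      simp
  rw [setIntegral_congr_fun measurableSet_Ioi hinner, setIntegral_indicator measurableSet_Ioo,
    Set.inter_eq_self_of_subset_right Set.Ioo_subset_Ioi_self, ← integral_Ioc_eq_integral_Ioo,
    ← intervalIntegral.integral_of_le zero_le_one, intervalIntegral.integral_const_mul, integral_pow]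
  norm_num; ring

/-- the denominator -/
def Dn (a φ k : ℝ) (x : ℂ) : ℝ :=
  φ ^ 2 * ((1 - a * x.re) ^ 2 + a ^ 2 * x.im ^ 2) + k * ((x.re - a) ^ 2 + x.im ^ 2)

lemma Dn_meas (a φ k : ℝ) : Measurable (Dn a φ k) := by
  unfold Dn
  have := Complex.measurable_re
  have := Complex.measurable_im
  fun_prop

lemma Dn_lower {a φ k δ : ℝ} (ha : 1/2 ≤ a) (ha1 : a < 1) (hk : k < 0) (hδ : 0 < δ)
    (hs : δ ≤ φ ^ 2 + k) {x : ℂ} (hx : x ∈ unitDisk) :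
    0 < Dn a φ k x ∧ δ / 4 * x.im ^ 2 ≤ Dn a φ k x := by
  have h2 := disk_normSq hx
  have h3 := abs_le.mp (disk_re hx)
  have e : Dn a φ k x = (φ^2 + k) * ((1 - a * x.re) ^ 2 + a ^ 2 * x.im ^ 2)
      + (-k) * ((1 - a^2) * (1 - (x.re^2 + x.im^2))) := by unfold Dn; ring
  have p1 : 0 ≤ (-k) * ((1 - a^2) * (1 - (x.re^2 + x.im^2))) := by
    apply mul_nonneg (by linarith)
    apply mul_nonneg <;> nlinarith
  have p2 : 0 < 1 - a * x.re := by nlinarith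
  have p3 : δ * ((1 - a * x.re) ^ 2 + a ^ 2 * x.im ^ 2) ≤ (φ^2 + k) * ((1 - a * x.re) ^ 2 + a ^ 2 * x.im ^ 2) := by
    gcongr
  have p4 : 0 < δ * ((1 - a * x.re) ^ 2 + a ^ 2 * x.im ^ 2) := by positivity
  have p5 : δ / 4 * x.im ^ 2 ≤ δ * ((1 - a * x.re) ^ 2 + a ^ 2 * x.im ^ 2) := by
    have : (1/4) * x.im^2 ≤ a^2 * x.im^2 := by
      gcongr; nlinarith
    nlinarith [sq_nonneg (1 - a * x.re)]
  rw [e]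
  constructor <;> linarith

lemma Dn_upper {a φ k B : ℝ} (ha : 0 < a) (ha1 : a < 1) (hk : k < 0) (hB : φ ^ 2 ≤ B)
    {x : ℂ} (hx : x ∈ unitDisk) : Dn a φ k x ≤ B * 5 := by
  have h2 := disk_normSq hx
  have h3 := abs_le.mp (disk_re hx)
  have p1 : k * ((x.re - a) ^ 2 + x.im ^ 2) ≤ 0 := mul_nonpos_of_nonpos_of_nonneg hk.le (by positivity)
  have p2 : (1 - a * x.re) ^ 2 + a ^ 2 * x.im ^ 2 ≤ 5 := by
    have q1 : -1 ≤ a * x.re := by nlinarith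
    have q2 : a * x.re ≤ 1 := by nlinarith
    have q3 : a^2 * x.im^2 ≤ 1 * 1 := by
      gcongr <;> nlinarith
    nlinarith
  have hB0 : 0 ≤ B := (sq_nonneg φ).trans hB
  have p3 : φ ^ 2 * ((1 - a * x.re) ^ 2 + a ^ 2 * x.im ^ 2) ≤ B * 5 := by gcongr
  unfold Dn; linarith

lemma Dlog_bound {a φ k δ B : ℝ} (ha : 1/2 ≤ a) (ha1 : a < 1) (hk : k < 0) (hδ : 0 < δ)
    (hs : δ ≤ φ ^ 2 + k) (hB : φ ^ 2 ≤ B) :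
    ∀ᵐ x ∂((volume : Measure ℂ).restrict unitDisk), ‖x.re * Real.log (Dn a φ k x)‖
      ≤ |Real.log (B * 5)| + |Real.log (δ / 4)| + 2 * |Real.log x.im| := by
  filter_upwards [ae_restrict_mem meas_disk, ae_restrict_of_ae ae_im_ne] with x hx hy
  rw [Real.norm_eq_abs, abs_mul]
  have h1 := disk_re hx
  have := bound_log (m := δ / 4) (by positivity) hy (Dn_lower ha ha1 hk hδ hs hx).2
    (Dn_upper (by linarith) ha1 hk hB hx)
  calc _ ≤ 1 * |Real.log (Dn a φ k x)| := by gcongr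
    _ ≤ _ := by rw [one_mul]; exact this

lemma Dlog_aesm (a φ k : ℝ) : AEStronglyMeasurable (fun x : ℂ => x.re * Real.log (Dn a φ k x))
    ((volume : Measure ℂ).restrict unitDisk) :=
  (Complex.measurable_re.mul (Real.measurable_log.comp (Dn_meas a φ k))).aestronglyMeasurable

lemma disk_prof {a φ k δ : ℝ} (ha : 1/2 ≤ a) (ha1 : a < 1) (hφ : 0 < φ) (hk : k < 0) (hδ : 0 < δ)
    (hs : δ ≤ φ ^ 2 + k) :
    ∫ x in unitDisk, x.re * prof a φ k x = -2 * ∫ x in unitDisk, x.re * Real.log (Dn a φ k x) := by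
  have hi : IntegrableOn (fun x : ℂ => x.re * Real.log (Dn a φ k x)) unitDisk :=
    Integrable.mono' (bd_int (φ^2 * 5) (δ/4)) (Dlog_aesm a φ k) (Dlog_bound ha ha1 hk hδ hs le_rfl)
  have e : ∫ x in unitDisk, x.re * prof a φ k x = ∫ x in unitDisk,
      ((2 * Real.log (2 * (1 - a^2) * φ)) * x.re + (-2) * (x.re * Real.log (Dn a φ k x))) := by
    apply setIntegral_congr_fun meas_disk
    intro x hx
    have hD := (Dn_lower ha ha1 hk hδ hs hx).1
    have ha2 : 0 < 1 - a^2 := by nlinarith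
    change x.re * (2 * Real.log (2 * (1 - a^2) * φ / Dn a φ k x)) = _
    rw [Real.log_div (by positivity) hD.ne']
    ring
  rw [e, integral_add (re_int.const_mul _) (hi.const_mul _), integral_const_mul, integral_const_mul, re_zero]
  ring

/-- Appendix Lemma: limits of ∫_𝔻 x₁ u_{a_n} and ∫_{∂𝔻} x₁ u_{a_n}. -/
theorem profile_integral_limits
    (a φ k : ℕ → ℝ) (φl kl δb : ℝ)
    (ha1 : ∀ n, a n ∈ Set.Ioo (0:ℝ) 1) (ha2 : Tendsto a atTop (nhds 1))
    (hφpos : ∀ n, 0 < φ n) (hkneg : ∀ n, k n < 0)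
    (hφlim : Tendsto φ atTop (nhds φl)) (hklim : Tendsto k atTop (nhds kl))
    (hlim : 0 < φl ^ 2 + kl)
    (hδ : 0 < δb) (hsep : ∀ n, δb ≤ φ n ^ 2 + k n) :
    Tendsto (fun n => ∫ x in unitDisk, x.re * prof (a n) (φ n) (k n) x)
      atTop (nhds π) ∧
    Tendsto (fun n => bint (fun x => x.re * prof (a n) (φ n) (k n) x))
      atTop (nhds (4 * π)) := by
  constructor
  · have hev : ∀ᶠ n in atTop, 1/2 ≤ a n := ha2.eventually (Ici_mem_nhds (by norm_num))
    have hB : ∀ᶠ n in atTop, φ n ^ 2 ≤ φl ^ 2 + 1 :=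
      (hφlim.pow 2).eventually (Iic_mem_nhds (by linarith))
    have hlimint : ∫ x in unitDisk, x.re * Real.log ((φl^2 + kl) * Complex.normSq (1 - x)) = -π / 2 := by
      have e : ∫ x in unitDisk, x.re * Real.log ((φl^2 + kl) * Complex.normSq (1 - x))
          = ∫ x in unitDisk, (Real.log (φl^2 + kl) * x.re + x.re * Real.log (Complex.normSq (1 - x))) := by
        apply setIntegral_congr_fun meas_disk
        intro x hx
        have hx1 : Complex.normSq (1 - x) ≠ 0 := by
          intro h
          rw [Complex.normSq_eq_zero, sub_eq_zero] at h
          have := disk_norm hx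
          rw [← h] at this
          simp at this
        change x.re * Real.log ((φl^2 + kl) * Complex.normSq (1 - x)) = _
        rw [Real.log_mul hlim.ne' hx1]; ring
      rw [e, integral_add (re_int.const_mul _) nlog_int, integral_const_mul, re_zero, disk_log]
      ring
    have hT : Tendsto (fun n => ∫ x in unitDisk, x.re * Real.log (Dn (a n) (φ n) (k n) x)) atTop
        (nhds (-π / 2)) := by
      rw [← hlimint]
      apply tendsto_integral_filter_of_dominated_convergence
        (fun x : ℂ => |Real.log ((φl ^ 2 + 1) * 5)| + |Real.log (δb / 4)| + 2 * |Real.log x.im|)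
      · exact Eventually.of_forall fun n => Dlog_aesm _ _ _
      · filter_upwards [hev, hB] with n h1 h2
        exact Dlog_bound h1 (ha1 n).2 (hkneg n) hδ (hsep n) h2
      · exact bd_int _ _
      · filter_upwards [ae_restrict_mem meas_disk] with x hx
        have hx1 : Complex.normSq (1 - x) ≠ 0 := by
          intro h
          rw [Complex.normSq_eq_zero, sub_eq_zero] at h
          have := disk_norm hx
          rw [← h] at this
          simp at this
        apply Tendsto.const_mul
        apply Tendsto.log _ (mul_ne_zero hlim.ne' hx1)
        have e : (φl^2 + kl) * Complex.normSq (1 - x) =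
          φl ^ 2 * ((1 - 1 * x.re) ^ 2 + 1 ^ 2 * x.im ^ 2) + kl * ((x.re - 1) ^ 2 + x.im ^ 2) := by
          rw [normSq_one_sub]; ring
        rw [e]
        unfold Dn
        apply Tendsto.add
        · apply (hφlim.pow 2).mul
          exact ((tendsto_const_nhds.sub (ha2.mul_const _)).pow 2).add ((ha2.pow 2).mul_const _)
        · apply hklim.mul
          exact ((tendsto_const_nhds.sub ha2).pow 2).add_const _
    have h2 := hT.const_mul (-2)
    have e : -2 * (-π / 2) = π := by ring
    rw [e] at h2
    apply h2.congr'
    filter_upwards [hev] with n h1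
    exact (disk_prof h1 (ha1 n).2 (hφpos n) (hkneg n) hδ (hsep n)).symm
  · have : ∀ n, bint (fun x => x.re * prof (a n) (φ n) (k n) x) = 4 * π * a n := fun n =>
      bdry_int _ _ _ (ha1 n).1 (ha1 n).2 (hφpos n) (hδ.trans_le (hsep n))
    simp only [this]
    simpa using ha2.const_mul (4 * π)

end
end

section
/- ∫_𝔻 x₁ log( (1−x₁)² + x₂² ) dx = −π/2, i.e. the integral of x₁·log|1−x|² over the unit disk (identifying x = x₁ + i x₂ ∈ ℂ) equals −π/2. -/
open MeasureTheory Real Filter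

noncomputable section

theorem aux_avg (r : ℝ) (h0 : 0 < r) (h1 : r < 1) :
    Real.circleAverage (fun z : ℂ => z.re * Real.log ((1 - z.re) ^ 2 + z.im ^ 2)) 0 r = - r ^ 2 := by
  set g : ℂ → ℂ := fun z => Complex.log (1 - z) with hg
  have hd : ∀ z ∈ Metric.ball (0:ℂ) 1, HasDerivAt g (-1 / (1 - z)) z := by
    intro z hz
    have hz' : ‖z‖ < 1 := by simpa using hz
    have : (1 - z) ∈ Complex.slitPlane := by
      left
      have := Complex.re_le_norm z
      simp; linarith
    have h := ((hasDerivAt_id z).const_sub 1).clog this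
    simpa using h
  have hgd : DifferentiableOn ℂ g (Metric.ball 0 1) := fun z hz =>
    (hd z hz).differentiableAt.differentiableWithinAt
  have hds : DifferentiableOn ℂ (dslope g 0) (Metric.ball 0 1) :=
    (Complex.differentiableOn_dslope (Metric.ball_mem_nhds 0 one_pos)).2 hgd
  set F : ℂ → ℂ := fun z => z * g z + (r:ℂ) ^ 2 * dslope g 0 z with hF
  have hFd : DifferentiableOn ℂ F (Metric.ball 0 1) :=
    (differentiableOn_id.mul hgd).add (hds.const_mul _)
  have habs : |r| = r := abs_of_pos h0
  have hsub : Metric.closedBall (0:ℂ) |r| ⊆ Metric.ball 0 1 :=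
    Metric.closedBall_subset_ball (by rw [habs]; exact h1)
  have hcl : DiffContOnCl ℂ F (Metric.ball 0 |r|) := by
    apply DifferentiableOn.diffContOnCl
    rw [closure_ball _ (by rw [habs]; exact h0.ne')]
    exact hFd.mono hsub
  have hav := hcl.circleAverage
  have hF0 : F 0 = - (r:ℂ) ^ 2 := by
    have := (hd 0 (by simp)).deriv
    simp [hF, this]
  have hci : CircleIntegrable F 0 r := by
    apply ContinuousOn.circleIntegrable h0.le
    apply hFd.continuousOn.mono
    rw [← habs]
    exact Metric.sphere_subset_closedBall.trans hsub
  have hre := Complex.reCLM.circleAverage_comp_comm hci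
  rw [hav, hF0] at hre
  have e1 : (Complex.reCLM) (- (r:ℂ) ^ 2) = - r ^ 2 := by
    rw [← Complex.ofReal_pow, ← Complex.ofReal_neg]; exact Complex.ofReal_re _
  rw [e1] at hre
  rw [← hre]
  apply Real.circleAverage_congr_sphere
  intro z hz
  have hzn : ‖z‖ = r := by simpa [habs] using hz
  have hz0 : z ≠ 0 := by
    intro h; rw [h] at hzn; simp at hzn; linarith
  have hnsq : z.re ^ 2 + z.im ^ 2 = r ^ 2 := by
    rw [← hzn, Complex.sq_norm, Complex.normSq_apply]; ring
  have e2 : (r:ℂ) ^ 2 * dslope g 0 z = (starRingEnd ℂ) z * g z := by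
    rw [dslope_of_ne _ hz0, slope_def_field]
    have : (r:ℂ) ^ 2 = (starRingEnd ℂ) z * z := by
      rw [mul_comm, Complex.mul_conj, ← Complex.sq_norm, hzn]; push_cast; rfl
    rw [this]
    have g0 : g 0 = 0 := by simp [hg]
    rw [g0]; field_simp; simp; ring
  have e3 : Real.log ((1 - z.re) ^ 2 + z.im ^ 2) = 2 * (g z).re := by
    have : (1 - z.re) ^ 2 + z.im ^ 2 = ‖1 - z‖ ^ 2 := by
      rw [Complex.sq_norm, Complex.normSq_apply]; simp; ring
    rw [this, Real.log_pow, hg, Complex.log_re]; norm_num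
  simp only [Function.comp, hF]
  rw [e2, e3]
  simp
  ring

theorem aux_inner (r : ℝ) (h0 : 0 < r) (h1 : r < 1) :
    ∫ θ in Set.Ioo (-π) π, r * (r * cos θ * Real.log ((1 - r * cos θ) ^ 2 + (r * sin θ) ^ 2))
      = - 2 * π * r ^ 3 := by
  rw [MeasureTheory.integral_const_mul, ← integral_Ioc_eq_integral_Ioo,
    ← intervalIntegral.integral_of_le (by linarith [pi_pos])]
  have h := aux_avg r h0 h1
  rw [Real.circleAverage_eq_integral_add (-π),
    intervalIntegral.integral_comp_add_right (fun θ => (fun z : ℂ => z.re * Real.log ((1 - z.re) ^ 2 + z.im ^ 2)) (circleMap 0 r θ))] at h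
  have e : 2 * π + -π = π := by ring
  rw [e, zero_add] at h
  have e4 : ∀ θ : ℝ, (circleMap 0 r θ).re = r * cos θ := by
    intro θ; simp [circleMap, Complex.exp_ofReal_mul_I_re]
  have e5 : ∀ θ : ℝ, (circleMap 0 r θ).im = r * sin θ := by
    intro θ; simp [circleMap, Complex.exp_ofReal_mul_I_im]
  simp only [e4, e5, smul_eq_mul] at h
  have hp := pi_pos
  rw [inv_mul_eq_iff_eq_mul₀ (by positivity)] at h
  rw [h]; ring

theorem aux_integrable :
    IntegrableOn (fun p : ℝ × ℝ => p.1 * (p.1 * cos p.2 * Real.log ((1 - p.1 * cos p.2) ^ 2 + (p.1 * sin p.2) ^ 2)))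
      (Set.Ioo (0:ℝ) 1 ×ˢ Set.Ioo (-π) π) (volume.prod volume) := by
  have hs : IntegrableOn (fun θ => Real.log 4 + 2 * |Real.log (sin θ)|) (Set.Ioo (-π) π) := by
    have : IntervalIntegrable (fun θ => Real.log (sin θ)) volume (-π) π := intervalIntegrable_log_sin
    rw [intervalIntegrable_iff_integrableOn_Ioo_of_le (by linarith [pi_pos])] at this
    exact (integrable_const _).add (this.abs.const_mul 2)
  rw [IntegrableOn, ← Measure.prod_restrict]
  have hb := hs.comp_snd (volume.restrict (Set.Ioo (0:ℝ) 1))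
  refine hb.mono' (by
    apply Measurable.aestronglyMeasurable
    fun_prop) ?_
  rw [Measure.prod_restrict]
  have hms : MeasurableSet (Set.Ioo (0:ℝ) 1 ×ˢ Set.Ioo (-π) π) := measurableSet_Ioo.prod measurableSet_Ioo
  have hne : ∀ᵐ p : ℝ × ℝ ∂((volume.prod volume).restrict (Set.Ioo (0:ℝ) 1 ×ˢ Set.Ioo (-π) π)), p.2 ≠ 0 := by
    apply ae_restrict_of_ae
    have h0 : ∀ᵐ y : ℝ ∂volume, y ≠ 0 := by simp [ae_iff]
    exact Measure.quasiMeasurePreserving_snd.ae h0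
  filter_upwards [ae_restrict_mem hms, hne] with p hp hp0
  obtain ⟨⟨hr0, hr1⟩, ht0, ht1⟩ := hp
  have hsin : sin p.2 ≠ 0 := by
    intro h
    exact hp0 ((sin_eq_zero_iff_of_lt_of_lt ht0 ht1).1 h)
  have hcs := sin_sq_add_cos_sq p.2
  have hs2 : 0 < sin p.2 ^ 2 := by positivity
  set A := (1 - p.1 * cos p.2) ^ 2 + (p.1 * sin p.2) ^ 2 with hA
  have hAe : A = 1 - 2 * p.1 * cos p.2 + p.1 ^ 2 := by
    rw [hA]; linear_combination p.1 ^ 2 * hcs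
  have hlow : sin p.2 ^ 2 ≤ A := by
    nlinarith [sq_nonneg (p.1 - cos p.2)]
  have hup : A ≤ 4 := by
    nlinarith [neg_one_le_cos p.2]
  have l1 : Real.log (sin p.2 ^ 2) ≤ Real.log A := Real.log_le_log hs2 hlow
  have l2 : Real.log A ≤ Real.log 4 := Real.log_le_log (hs2.trans_le hlow) hup
  rw [Real.log_pow] at l1
  push_cast at l1
  have l4 : 0 < Real.log 4 := Real.log_pos (by norm_num)
  have habs : |Real.log A| ≤ Real.log 4 + 2 * |Real.log (sin p.2)| := by
    rw [abs_le]
    constructor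
    · linarith [neg_abs_le (Real.log (sin p.2))]
    · linarith [abs_nonneg (Real.log (sin p.2))]
  rw [Real.norm_eq_abs, abs_mul, abs_mul, abs_mul, abs_of_pos hr0]
  have hc := abs_cos_le_one p.2
  have h1 : p.1 * |cos p.2| ≤ 1 := by nlinarith [abs_nonneg (cos p.2)]
  have h2 : p.1 * |cos p.2| * |Real.log A| ≤ |Real.log A| :=
    mul_le_of_le_one_left (abs_nonneg _) h1
  have h3 : p.1 * (p.1 * |cos p.2| * |Real.log A|) ≤ p.1 * |cos p.2| * |Real.log A| :=
    mul_le_of_le_one_left (by positivity) hr1.le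
  linarith

/-- ∫_𝔻 x₁ log|1−x|² dx = −π/2. -/
theorem integral_x1_log_disk :
    ∫ x in unitDisk, x.re * Real.log ((1 - x.re) ^ 2 + x.im ^ 2) = -π / 2 := by
  have hmd : MeasurableSet unitDisk := Metric.isOpen_ball.measurableSet
  rw [← integral_indicator hmd, ← Complex.integral_comp_polarCoord_symm]
  set G : ℝ × ℝ → ℝ := fun p => p.1 * (p.1 * cos p.2 * Real.log ((1 - p.1 * cos p.2) ^ 2 + (p.1 * sin p.2) ^ 2)) with hG
  have hms : MeasurableSet (Set.Ioo (0:ℝ) 1 ×ˢ Set.Ioo (-π) π) := measurableSet_Ioo.prod measurableSet_Ioo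
  have hmt : MeasurableSet (polarCoord.target) := polarCoord.open_target.measurableSet
  have key : ∫ p in polarCoord.target, p.1 • unitDisk.indicator (fun x : ℂ => x.re * Real.log ((1 - x.re) ^ 2 + x.im ^ 2)) (Complex.polarCoord.symm p)
      = ∫ p in Set.Ioo (0:ℝ) 1 ×ˢ Set.Ioo (-π) π, G p := by
    rw [← integral_indicator hmt, ← integral_indicator hms]
    congr 1
    ext ⟨r, θ⟩
    have hmem : Complex.polarCoord.symm (r, θ) ∈ unitDisk ↔ |r| < 1 := by
      rw [unitDisk, mem_ball_zero_iff, Complex.norm_polarCoord_symm]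
    have hre : (Complex.polarCoord.symm (r, θ)).re = r * cos θ := by
      simp [Complex.cos_ofReal_re]
    have him : (Complex.polarCoord.symm (r, θ)).im = r * sin θ := by
      simp [Complex.sin_ofReal_re]
    by_cases h1 : (r, θ) ∈ polarCoord.target
    · rw [Set.indicator_of_mem h1]
      have h1' : 0 < r ∧ θ ∈ Set.Ioo (-π) π := h1
      by_cases h2 : r < 1
      · rw [Set.indicator_of_mem (hmem.2 (by rw [abs_of_pos h1'.1]; exact h2)),
          Set.indicator_of_mem (show (r, θ) ∈ Set.Ioo (0:ℝ) 1 ×ˢ Set.Ioo (-π) π from ⟨⟨h1'.1, h2⟩, h1'.2⟩)]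
        simp only [hre, him, hG, smul_eq_mul]
      · rw [Set.indicator_of_notMem (fun h => h2 (by rw [hmem, abs_of_pos h1'.1] at h; exact h)),
          Set.indicator_of_notMem (fun h => h2 h.1.2)]
        simp
    · rw [Set.indicator_of_notMem h1, Set.indicator_of_notMem]
      intro h
      exact h1 ⟨h.1.1, h.2⟩
  rw [key, Measure.volume_eq_prod, setIntegral_prod _ aux_integrable]
  have : ∫ r in Set.Ioo (0:ℝ) 1, ∫ θ in Set.Ioo (-π) π, G (r, θ) = ∫ r in Set.Ioo (0:ℝ) 1, - 2 * π * r ^ 3 :=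
    setIntegral_congr_fun measurableSet_Ioo (fun r hr => aux_inner r hr.1 hr.2)
  rw [this, ← integral_Ioc_eq_integral_Ioo, ← intervalIntegral.integral_of_le zero_le_one,
    intervalIntegral.integral_const_mul, integral_pow]
  norm_num
  ring

end
end
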